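/- Existence of a small derivative: for every ε > 0, for all but finitely many triples (a,b,c) of pairwise coprime positive integers with c > 2 and a + b = c, there is a nonzero derivation ψ ∈ 𝒯(a,b) with ‖ψ‖ < c^{1/r + ε}, where r = ω(abc) − 1. -/

import Mathlib

open Finset

/-- The arithmetic derivative attached to `ψ`: `d^ψ(n) = Σ_{p ∣ n} (n·v_p(n)/p)·ψ(p)`,
with `d^ψ(0) = 0` (empty sum). Each term is written as `(n/p)·v_p(n)·ψ(p)`, exact since `p ∣ n`. -/
def dpsi (ψ : ℕ → ℤ) (n : ℤ) : ℤ :=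
  ∑ p ∈ n.natAbs.primeFactors, (n / (p : ℤ)) * (n.natAbs.factorization p : ℤ) * ψ p

/-- A derivation: a function on primes (zero off primes) with finite norm. -/
def IsDeriv (ψ : ℕ → ℤ) : Prop :=
  (∀ p : ℕ, ¬ p.Prime → ψ p = 0) ∧ ∃ B : ℤ, ∀ p : ℕ, |ψ p| ≤ B

/-- The norm `‖ψ‖ = sup_p |ψ(p)|`. -/
noncomputable def dNorm (ψ : ℕ → ℤ) : ℝ := ⨆ p : ℕ, (|ψ p| : ℝ)

/-- Membership in `𝒯(a,b)`: a derivation supported on the primes dividing `ab(a+b)`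
satisfying `d^ψ(a+b) = d^ψ(a) + d^ψ(b)`. -/
def MemT (a b : ℕ) (ψ : ℕ → ℤ) : Prop :=
  IsDeriv ψ ∧ (∀ p : ℕ, p.Prime → ¬ p ∣ (a * b * (a + b)) → ψ p = 0) ∧
    dpsi ψ ((a : ℤ) + (b : ℤ)) = dpsi ψ (a : ℤ) + dpsi ψ (b : ℤ)

/-- The `ψ`-Wronskian `W^ψ(a,b) = a·d^ψ(b) − b·d^ψ(a)`. -/
def Wpsi (ψ : ℕ → ℤ) (a b : ℤ) : ℤ := a * dpsi ψ b - b * dpsi ψ a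

/-- Membership in `𝒯°(a,b)`: elements of `𝒯(a,b)` for which `a, b` are `ψ`-dependent. -/
def MemT0 (a b : ℕ) (ψ : ℕ → ℤ) : Prop := MemT a b ψ ∧ Wpsi ψ (a : ℤ) (b : ℤ) = 0

/-- The radical of `n`: product of the distinct primes dividing `n`. -/
def radN (n : ℕ) : ℕ := ∏ p ∈ n.primeFactors, p

/-- The Small Derivatives Conjecture with exponent `η`: for all but finitely many triples of
coprime positive integers `(a,b,c)` with `a+b=c`, not of the form `(1,N,q)` with `q` prime
up to order, there is `ψ ∈ 𝒯(a,b)` with `a,b` `ψ`-independent and `‖ψ‖ < c^η`. -/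
def SDC (η : ℝ) : Prop :=
  {t : ℕ × ℕ × ℕ | 0 < t.1 ∧ 0 < t.2.1 ∧ t.1 + t.2.1 = t.2.2 ∧ Nat.Coprime t.1 t.2.1 ∧
    ¬ (∃ N q : ℕ, q.Prime ∧ ({t.1, t.2.1, t.2.2} : Multiset ℕ) = {1, N, q}) ∧
    ¬ ∃ ψ : ℕ → ℤ, MemT t.1 t.2.1 ψ ∧ Wpsi ψ (t.1 : ℤ) (t.2.1 : ℤ) ≠ 0 ∧
      dNorm ψ < (t.2.2 : ℝ) ^ η}.Finite

/-!
The set `𝒯(a, b)` consists of the integer vectors `ψ`, indexed by the primes dividing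
`a * b * (a + b)`, which are killed by a single linear form with coefficients `O(c log c)`,
`c = a + b`. There are `ω = ω(abc) = O(log c)` unknowns, so Siegel's lemma for one equation gives a
nonzero solution of norm at most `O(c log² c) ^ (1 / (ω - 1))`, and `log² c` is absorbed by `c ^ ε`.
-/

section Siegel

open scoped Matrix.Norms.Elementwise

theorem exists_int_ne_zero_sum_mul_eq_zero_abs_le {ι : Type*} {S : Finset ι} (hS : 1 < #S)
    {w : ι → ℤ} {M : ℝ} (hM : 1 ≤ M) (hw : ∀ i ∈ S, (|w i| : ℝ) ≤ M) :
    ∃ x : ι → ℤ, x ≠ 0 ∧ (∀ i ∉ S, x i = 0) ∧ ∑ i ∈ S, w i * x i = 0 ∧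
      ∀ i, (|x i| : ℝ) ≤ (#S * M) ^ (1 / ((#S : ℝ) - 1)) := by
  classical
  let A : Matrix (Fin 1) S ℤ := fun _ i => w i
  obtain ⟨t, ht_ne, ht_ker, ht_norm⟩ :=
    Int.Matrix.exists_ne_zero_int_vec_norm_le A (by simpa using hS) (by simp)
  have hA : ‖A‖ ≤ M := (Matrix.norm_le_iff (by linarith)).2 fun _ i => by
    simpa only [Int.norm_eq_abs] using hw i i.2
  have hS' : (1 : ℝ) < #S := by exact_mod_cast hS
  have ht_le : ‖t‖ ≤ (#S * M) ^ (1 / ((#S : ℝ) - 1)) := by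
    simp only [Fintype.card_coe, Fintype.card_fin, Nat.cast_one] at ht_norm
    refine ht_norm.trans (Real.rpow_le_rpow (by positivity) ?_ ?_)
    · gcongr
      exact max_le hM hA
    · exact one_div_nonneg.2 (by linarith)
  let x : ι → ℤ := fun i => if h : i ∈ S then t ⟨i, h⟩ else 0
  have hx_mem (i : S) : x i = t i := dif_pos i.2
  have hx_notMem (i : ι) (hi : i ∉ S) : x i = 0 := dif_neg hi
  refine ⟨x, ?_, hx_notMem, ?_, fun i => ?_⟩
  · intro hx
    exact ht_ne (funext fun i => by rw [← hx_mem, hx, Pi.zero_apply, Pi.zero_apply])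
  · rw [← Finset.sum_coe_sort S]
    simp only [hx_mem]
    exact congrFun ht_ker 0
  · by_cases hi : i ∈ S
    · rw [hx_mem ⟨i, hi⟩, ← Int.norm_eq_abs]
      exact (norm_le_pi_norm t _).trans ht_le
    · rw [hx_notMem i hi, Int.cast_zero, abs_zero]
      exact (norm_nonneg t).trans ht_le

end Siegel

lemma factorization_le_log_two (n p : ℕ) : n.factorization p ≤ Nat.log 2 n := by
  by_cases hp : p.Prime
  · rw [Nat.factorization_def n hp]
    exact (padicValNat_le_nat_log n).trans (Nat.log_anti_left one_lt_two hp.two_le)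
  · simp only [Nat.factorization_eq_zero_of_not_prime n hp, Nat.zero_le]

lemma card_primeFactors_le_log_two (n : ℕ) : #n.primeFactors ≤ Nat.log 2 n := by
  obtain rfl | hn := n.eq_zero_or_pos
  · simp
  · refine Nat.le_log_of_pow_le one_lt_two ?_
    calc 2 ^ #n.primeFactors ≤ ∏ p ∈ n.primeFactors, p :=
          Finset.pow_card_le_prod _ _ _ fun p hp => (Nat.prime_of_mem_primeFactors hp).two_le
      _ ≤ n := Nat.le_of_dvd hn n.prod_primeFactors_dvd

lemma card_primeFactors_mul_le (m n : ℕ) :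
    #(m * n).primeFactors ≤ #m.primeFactors + #n.primeFactors := by
  obtain rfl | hm := eq_or_ne m 0
  · simp
  obtain rfl | hn := eq_or_ne n 0
  · simp
  rw [Nat.primeFactors_mul hm hn]
  exact card_union_le _ _

lemma card_primeFactors_mul_mul_add_le (a b : ℕ) :
    #(a * b * (a + b)).primeFactors ≤ 3 * Nat.log 2 (a + b) := by
  have hab := card_primeFactors_mul_le a b
  have habc := card_primeFactors_mul_le (a * b) (a + b)
  have ha := (card_primeFactors_le_log_two a).trans (Nat.log_mono_right (a.le_add_right b))
  have hb := (card_primeFactors_le_log_two b).trans (Nat.log_mono_right (b.le_add_left a))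
  have hc := card_primeFactors_le_log_two (a + b)
  lia

lemma one_lt_card_primeFactors_mul {m n : ℕ} (h : m.Coprime n) (hm : 1 < m) (hn : 1 < n) :
    1 < #(m * n).primeFactors := by
  have hm' := (Nat.nonempty_primeFactors.2 hm).card_pos
  have hn' := (Nat.nonempty_primeFactors.2 hn).card_pos
  rw [h.primeFactors_mul, card_union_of_disjoint h.disjoint_primeFactors]
  lia

/-- The arithmetic partial derivative `∂n/∂p = v_p(n) n / p`: the coefficient of `ψ p` in
`d^ψ(n)`. The truncated division is exact, since `v_p(n) = 0` unless `p ∣ n`. -/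
def partialDeriv (n p : ℕ) : ℕ := n / p * n.factorization p

lemma partialDeriv_le (n p : ℕ) : partialDeriv n p ≤ n * Nat.log 2 n :=
  Nat.mul_le_mul (n.div_le_self p) (factorization_le_log_two n p)

lemma dpsi_natCast_eq_sum (ψ : ℕ → ℤ) {n : ℕ} {S : Finset ℕ} (h : n.primeFactors ⊆ S) :
    dpsi ψ n = ∑ p ∈ S, (partialDeriv n p : ℤ) * ψ p := by
  unfold dpsi partialDeriv
  push_cast
  rw [Int.natAbs_natCast]
  refine Finset.sum_subset h fun p _ hp => ?_
  rw [← Nat.support_factorization, Finsupp.notMem_support_iff] at hp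
  rw [hp, Nat.cast_zero, mul_zero, zero_mul]

/-- The coefficient of `ψ p` in the linear form `d^ψ(a + b) - (d^ψ(a) + d^ψ(b))`, which measures
the failure of `d^ψ` to be additive at `(a, b)`. -/
def additivityDefect (a b p : ℕ) : ℤ :=
  partialDeriv (a + b) p - (partialDeriv a p + partialDeriv b p)

lemma abs_additivityDefect_le (a b p : ℕ) :
    |additivityDefect a b p| ≤ (a + b) * Nat.log 2 (a + b) := by
  have hc := partialDeriv_le (a + b) p
  have hab : partialDeriv a p + partialDeriv b p ≤ (a + b) * Nat.log 2 (a + b) :=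
    calc partialDeriv a p + partialDeriv b p ≤ a * Nat.log 2 a + b * Nat.log 2 b :=
          add_le_add (partialDeriv_le a p) (partialDeriv_le b p)
      _ ≤ a * Nat.log 2 (a + b) + b * Nat.log 2 (a + b) := by
          gcongr <;> lia
      _ = (a + b) * Nat.log 2 (a + b) := (add_mul ..).symm
  exact abs_sub_le_of_nonneg_of_le (by positivity) (by exact_mod_cast hc) (by positivity)
    (by exact_mod_cast hab)

lemma isDeriv_of_support_subset {ψ : ℕ → ℤ} {S : Finset ℕ} (hS : ∀ p ∈ S, p.Prime)
    (hψ : ∀ p ∉ S, ψ p = 0) : IsDeriv ψ := by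
  refine ⟨fun p hp => hψ p (mt (hS p) hp), ∑ p ∈ S, |ψ p|, fun p => ?_⟩
  by_cases hp : p ∈ S
  · exact single_le_sum (f := fun q => |ψ q|) (fun q _ => abs_nonneg (ψ q)) hp
  · rw [hψ p hp, abs_zero]
    exact sum_nonneg fun q _ => abs_nonneg (ψ q)

theorem memT_iff {a b : ℕ} (ha : a ≠ 0) (hb : b ≠ 0) (ψ : ℕ → ℤ) :
    MemT a b ψ ↔ (∀ p ∉ (a * b * (a + b)).primeFactors, ψ p = 0) ∧
      ∑ p ∈ (a * b * (a + b)).primeFactors, additivityDefect a b p * ψ p = 0 := by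
  have habc : a * b * (a + b) ≠ 0 := by positivity
  have hadd : dpsi ψ ((a : ℤ) + b) = dpsi ψ a + dpsi ψ b ↔
      ∑ p ∈ (a * b * (a + b)).primeFactors, additivityDefect a b p * ψ p = 0 := by
    have ha' : a ∣ a * b * (a + b) := (dvd_mul_right a b).mul_right _
    have hb' : b ∣ a * b * (a + b) := (dvd_mul_left b a).mul_right _
    rw [← Nat.cast_add, dpsi_natCast_eq_sum ψ (Nat.primeFactors_mono ha' habc),
      dpsi_natCast_eq_sum ψ (Nat.primeFactors_mono hb' habc),
      dpsi_natCast_eq_sum ψ (Nat.primeFactors_mono (dvd_mul_left (a + b) (a * b)) habc),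
      ← sub_eq_zero]
    simp only [additivityDefect, sub_mul, add_mul, sum_sub_distrib, sum_add_distrib]
  constructor
  · rintro ⟨⟨hprime, -⟩, hdvd, h⟩
    refine ⟨fun p hp => ?_, hadd.1 h⟩
    by_cases hp' : p.Prime
    · exact hdvd p hp' fun h => hp (Nat.mem_primeFactors.2 ⟨hp', h, habc⟩)
    · exact hprime p hp'
  · rintro ⟨hsupp, h⟩
    exact ⟨isDeriv_of_support_subset (fun _ => Nat.prime_of_mem_primeFactors) hsupp,
      fun p _ hp => hsupp p (mt Nat.dvd_of_mem_primeFactors hp), hadd.2 h⟩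

theorem exists_memT_dNorm_le {a b : ℕ} (ha : 0 < a) (hb : 0 < b)
    (hω : 1 < #(a * b * (a + b)).primeFactors) :
    ∃ ψ : ℕ → ℤ, MemT a b ψ ∧ ψ ≠ 0 ∧
      dNorm ψ ≤ ((a + b : ℕ) * (3 * (Nat.log 2 (a + b) : ℝ) ^ 2)) ^
        (1 / ((#(a * b * (a + b)).primeFactors : ℝ) - 1)) := by
  set S := (a * b * (a + b)).primeFactors
  set L := Nat.log 2 (a + b)
  have hL : 1 ≤ L := Nat.le_log_of_pow_le one_lt_two (by lia)
  have hM : (1 : ℝ) ≤ (a + b : ℕ) * L := by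
    exact_mod_cast Nat.mul_pos (Nat.add_pos_left ha b) hL
  obtain ⟨ψ, hψ_ne, hψ_supp, hψ_sum, hψ_le⟩ := exists_int_ne_zero_sum_mul_eq_zero_abs_le hω hM
    fun p _ => by exact_mod_cast abs_additivityDefect_le a b p
  refine ⟨ψ, (memT_iff ha.ne' hb.ne' ψ).2 ⟨hψ_supp, hψ_sum⟩, hψ_ne, (ciSup_le hψ_le).trans ?_⟩
  have hS : (1 : ℝ) < #S := by exact_mod_cast hω
  have hSL : (#S : ℝ) ≤ 3 * L := by exact_mod_cast card_primeFactors_mul_mul_add_le a b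
  refine Real.rpow_le_rpow (by positivity) ?_ (one_div_nonneg.2 (by linarith))
  calc (#S : ℝ) * ((a + b : ℕ) * L) ≤ 3 * L * ((a + b : ℕ) * L) := by gcongr
    _ = (a + b : ℕ) * (3 * (L : ℝ) ^ 2) := by ring

open Asymptotics Filter in
lemma isLittleO_natLog_pow_rpow_atTop (b k : ℕ) {ε : ℝ} (hε : 0 < ε) :
    (fun n : ℕ => (Nat.log b n : ℝ) ^ k) =o[atTop] fun n : ℕ => (n : ℝ) ^ ε := by
  have hlog : (fun n : ℕ => (Nat.log b n : ℝ)) =O[atTop] fun n : ℕ => Real.log n := by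
    refine .of_bound (Real.log b)⁻¹ (.of_forall fun n => ?_)
    rw [Real.norm_of_nonneg (Nat.cast_nonneg _), Real.norm_of_nonneg (Real.log_natCast_nonneg n),
      ← div_eq_inv_mul]
    exact Real.natLog_le_logb n b
  refine (hlog.pow k).trans_isLittleO ?_
  simpa only [Function.comp_def, Real.rpow_natCast] using
    (isLittleO_log_rpow_rpow_atTop (k : ℝ) hε).comp_tendsto tendsto_natCast_atTop_atTop

open Filter in
lemma eventually_const_mul_natLog_pow_lt_rpow (C : ℝ) (b k : ℕ) {ε : ℝ} (hε : 0 < ε) :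
    ∀ᶠ n : ℕ in atTop, C * (Nat.log b n : ℝ) ^ k < (n : ℝ) ^ ε := by
  have hpos : ∀ᶠ n : ℕ in atTop, 0 < (n : ℝ) ^ ε :=
    (eventually_gt_atTop 0).mono fun n hn => by positivity
  have hlt := ((isLittleO_natLog_pow_rpow_atTop b k hε).const_mul_left
    C).eventuallyLT_norm_of_eventually_pos (hpos.mono fun n hn => norm_pos_iff.2 hn.ne')
  filter_upwards [hpos, hlt] with n hn hlt
  rw [Real.norm_of_nonneg hn.le] at hlt
  exact (le_abs_self _).trans_lt hlt

lemma mul_rpow_lt_rpow_add {x y s ε : ℝ} (hx : 1 ≤ x) (hy : 0 ≤ y) (hs : 0 < s) (hs' : s ≤ 1)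
    (hε : 0 ≤ ε) (hyx : y < x ^ ε) : (x * y) ^ s < x ^ (s + ε) := by
  have hx₀ : 0 < x := by linarith
  rw [Real.mul_rpow hx₀.le hy, Real.rpow_add hx₀]
  gcongr
  calc y ^ s < (x ^ ε) ^ s := Real.rpow_lt_rpow hy hyx hs
    _ ≤ x ^ ε := Real.rpow_le_self_of_one_le (Real.one_le_rpow hx hε) hs'

theorem existence_small_derivative_general (ε : ℝ) (hε : 0 < ε) :
    {t : ℕ × ℕ × ℕ | 0 < t.1 ∧ 0 < t.2.1 ∧ t.1 + t.2.1 = t.2.2 ∧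
      1 < #(t.1 * t.2.1 * t.2.2).primeFactors ∧
      ¬ ∃ ψ : ℕ → ℤ, MemT t.1 t.2.1 ψ ∧ ψ ≠ 0 ∧
        dNorm ψ < (t.2.2 : ℝ) ^
          (1 / (((t.1 * t.2.1 * t.2.2).primeFactors.card : ℝ) - 1) + ε)}.Finite := by
  obtain ⟨C, hC⟩ :=
    Filter.eventually_atTop.1 (eventually_const_mul_natLog_pow_lt_rpow 3 2 2 hε)
  refine (Set.finite_Iic (C, C, C)).subset ?_
  rintro ⟨a, b, c⟩ ⟨ha, hb, habc, hω, hno⟩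
  obtain rfl : a + b = c := habc
  suffices a + b < C by
    simp only [Set.mem_Iic, Prod.mk_le_mk]
    lia
  by_contra! hCc
  obtain ⟨ψ, hψ, hψ_ne, hψ_le⟩ := exists_memT_dNorm_le ha hb hω
  have hω' : (2 : ℝ) ≤ #(a * b * (a + b)).primeFactors := by exact_mod_cast hω
  exact hno ⟨ψ, hψ, hψ_ne, hψ_le.trans_lt <| mul_rpow_lt_rpow_add
    (by exact_mod_cast Nat.add_pos_left ha b) (by positivity) (one_div_pos.2 (by linarith))
    ((div_le_one (by linarith)).2 (by linarith)) hε.le (hC _ hCc)⟩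

/-- Existence of a small derivative. -/
theorem existence_small_derivative (ε : ℝ) (hε : 0 < ε) :
    {t : ℕ × ℕ × ℕ | 0 < t.1 ∧ 0 < t.2.1 ∧ 2 < t.2.2 ∧ t.1 + t.2.1 = t.2.2 ∧
      Nat.Coprime t.1 t.2.1 ∧ Nat.Coprime t.1 t.2.2 ∧ Nat.Coprime t.2.1 t.2.2 ∧
      ¬ ∃ ψ : ℕ → ℤ, MemT t.1 t.2.1 ψ ∧ ψ ≠ 0 ∧
        dNorm ψ < (t.2.2 : ℝ) ^
          (1 / (((t.1 * t.2.1 * t.2.2).primeFactors.card : ℝ) - 1) + ε)}.Finite := by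
  refine (existence_small_derivative_general ε hε).subset ?_
  rintro ⟨a, b, c⟩ ⟨ha, hb, hc, habc, -, hac, hbc, hno⟩
  exact ⟨ha, hb, habc, one_lt_card_primeFactors_mul (hac.mul_left hbc) (by nlinarith) (by lia), hno⟩
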